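/- arXiv:2304.03568 — 2 statements merged into one kernel-verified Lean document; each statement's English description precedes it below -/
import Mathlib

section
/- Let n ≥ 3, let (a_ij^∞) be a constant symmetric positive definite n×n matrix with inverse matrix (A_ij), and set Q(x) = (∑_{i,j=1}^n A_ij x_i x_j)^{1/2} for x ≠ 0. Fix 0 < β < 1 and set ψ(x) = Q(x)^{2−n} − Q(x)^{2−n−β}. Suppose (a_ij(x)) is a symmetric-matrix-valued function on {x : |x| ≥ R} satisfying |a_ij(x) − a_ij^∞| ≤ C|x|^{−1−σ} for some C > 0, σ > 0. Then there exists a constant C' > 0 such that for all |x| ≥ R, | ∑_{i,j=1}^n a_ij(x) ∂_{x_i}∂_{x_j}ψ(x) + β(n−2+β) Q(x)^{−n−β} | ≤ C' Q(x)^{−n−1−σ}. -/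
/-!
Away from the origin, with `y = Ax`, one has `∂ⱼ Q^p = p Q^{p-2} yⱼ` and hence
`∂ᵢ∂ⱼ Q^p = p Q^{p-2} Aᵢⱼ + p (p-2) Q^{p-4} yᵢ yⱼ` (`pdd_psi`, for a difference of two powers).
Contracting with `a^∞ = A⁻¹` and using `∑ a^∞ᵢⱼ Aᵢⱼ = n` and `∑ a^∞ᵢⱼ yᵢ yⱼ = Q²` gives
`p (p + n - 2) Q^{p-2}` (`sum_ainf_hess`). This vanishes for `p = 2 - n`, and for `p = 2 - n - β`
it equals `β (n-2+β) Q^{-n-β}`.  So the quantity to be bounded is exactly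
`∑ (aᵢⱼ - a^∞ᵢⱼ) ∂ᵢ∂ⱼ ψ`.

The size of the Hessian follows from the Cauchy–Schwarz inequality for a positive definite form,
`(M v)ᵢ² ≤ Mᵢᵢ ⟨v, M v⟩` (`mulVec_sq_le`). Applied to `A` it gives `|yᵢ| ≤ S Q`, hence
`|∂ᵢ∂ⱼ Q^p| ≤ K Q^{p-2}` (`abs_hess_le`) and also `Q ≤ S |x|`, which turns the decay in `|x|` into
decay in `Q`. Applied to `a^∞` and `v = y` it gives `|x|² ≤ tr(a^∞) Q²`, so `Q` is bounded below on
`|x| ≥ R`, and there the term `Q^{-n-β}` is dominated by `Q^{-n}`.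
-/

open scoped BigOperators RealInnerProductSpace

/-- Second partial derivative `∂_{x_i} ∂_{x_j} f` on Euclidean space. -/
noncomputable def pdd {n : ℕ} (f : EuclideanSpace ℝ (Fin n) → ℝ) (i j : Fin n)
    (x : EuclideanSpace ℝ (Fin n)) : ℝ :=
  fderiv ℝ (fun y => gradient f y j) x (EuclideanSpace.single i 1)

/-- The anisotropic distance `Q(x) = (∑ Aᵢⱼ xᵢ xⱼ)^{1/2}`. -/
noncomputable def Qfun {n : ℕ} (A : Matrix (Fin n) (Fin n) ℝ)
    (x : EuclideanSpace ℝ (Fin n)) : ℝ :=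
  Real.sqrt (∑ i, ∑ j, A i j * x i * x j)

/-- The `i`-th component of `A x`, half the `i`-th partial derivative of `Q²`. -/
noncomputable def Avec {n : ℕ} (A : Matrix (Fin n) (Fin n) ℝ) (x : EuclideanSpace ℝ (Fin n))
    (i : Fin n) : ℝ := ∑ k, A i k * x k

/-- The explicit formula for `∂ᵢ∂ⱼ Q^p` at `x ≠ 0`. -/
noncomputable def hess {n : ℕ} (A : Matrix (Fin n) (Fin n) ℝ) (p : ℝ) (i j : Fin n)
    (x : EuclideanSpace ℝ (Fin n)) : ℝ :=
  p * Qfun A x ^ (p - 2) * A i j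
    + p * (p - 2) * Qfun A x ^ (p - 4) * (Avec A x i * Avec A x j)

/-! ### Cauchy–Schwarz for a positive definite matrix -/

/-- Cauchy–Schwarz for the form `⟨v, M v⟩`, between `v` and the `i`-th basis vector. -/
lemma mulVec_sq_le {n : ℕ} {M : Matrix (Fin n) (Fin n) ℝ} (hM : M.PosDef) (v : Fin n → ℝ)
    (i : Fin n) : (∑ k, M i k * v k) ^ 2 ≤ M i i * ∑ k, v k * ∑ l, M k l * v l := by
  have hsymm : ∀ k l, M k l = M l k := fun k l => by
    simpa using hM.1.apply l k
  have hd : 0 < M i i := hM.diag_pos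
  set s : ℝ := ∑ k, M i k * v k with hs
  set q : ℝ := ∑ k, v k * ∑ l, M k l * v l with hq
  -- positivity of the form at `Mᵢᵢ v - (M v)ᵢ eᵢ`
  have h := hM.posSemidef.dotProduct_mulVec_nonneg (M i i • v - s • Pi.single i (1 : ℝ))
  have e1 : v ⬝ᵥ M.mulVec v = q := by simp [dotProduct, Matrix.mulVec, hq]
  have e2 : (Pi.single i (1 : ℝ)) ⬝ᵥ M.mulVec v = s := by
    simp [dotProduct, Matrix.mulVec, hs, Pi.single_apply]
  have e3 : v ⬝ᵥ M.mulVec (Pi.single i (1 : ℝ)) = s := by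
    simp [dotProduct, hs, mul_comm, hsymm i]
  have e4 : (Pi.single i (1 : ℝ)) ⬝ᵥ M.mulVec (Pi.single i (1 : ℝ)) = M i i := by
    simp
  have : 0 ≤ M i i * (M i i * q - s ^ 2) := by
    simp only [star_trivial, Matrix.mulVec_sub, Matrix.mulVec_smul, sub_dotProduct,
      dotProduct_sub, smul_dotProduct, dotProduct_smul, e1, e2, e3, e4, smul_eq_mul] at h
    linarith
  have := nonneg_of_mul_nonneg_right this hd
  linarith

section

variable {n : ℕ} {A : Matrix (Fin n) (Fin n) ℝ}

lemma quad_eq (x : EuclideanSpace ℝ (Fin n)) :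
    ∑ i, ∑ j, A i j * x i * x j = ∑ i, x i * Avec A x i := by
  simp only [Avec, Finset.mul_sum]
  exact Finset.sum_congr rfl fun i _ => Finset.sum_congr rfl fun j _ => by ring

lemma quad_pos (hA : A.PosDef) {x : EuclideanSpace ℝ (Fin n)} (hx : x ≠ 0) :
    0 < ∑ i, x i * Avec A x i := by
  have h := hA.dotProduct_mulVec_pos (x := x.ofLp) (by simpa using hx)
  simpa [dotProduct, Matrix.mulVec, Avec] using h

lemma Qfun_pos (hA : A.PosDef) {x : EuclideanSpace ℝ (Fin n)} (hx : x ≠ 0) : 0 < Qfun A x := by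
  rw [Qfun, quad_eq]
  exact Real.sqrt_pos.2 (quad_pos hA hx)

lemma Qfun_sq (hA : A.PosDef) {x : EuclideanSpace ℝ (Fin n)} (hx : x ≠ 0) :
    Qfun A x ^ 2 = ∑ i, x i * Avec A x i := by
  rw [Qfun, quad_eq, Real.sq_sqrt (quad_pos hA hx).le]

/-! ### Derivatives of powers of `Q` -/

lemma hasFDerivAt_coord (x : EuclideanSpace ℝ (Fin n)) (i : Fin n) :
    HasFDerivAt (fun y : EuclideanSpace ℝ (Fin n) => y i)
      (EuclideanSpace.proj i : EuclideanSpace ℝ (Fin n) →L[ℝ] ℝ) x :=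
  (EuclideanSpace.proj i : EuclideanSpace ℝ (Fin n) →L[ℝ] ℝ).hasFDerivAt

lemma hasFDerivAt_Avec (x : EuclideanSpace ℝ (Fin n)) (j : Fin n) :
    HasFDerivAt (fun y => Avec A y j)
      (∑ k, A j k • (EuclideanSpace.proj k : EuclideanSpace ℝ (Fin n) →L[ℝ] ℝ)) x := by
  unfold Avec
  exact HasFDerivAt.fun_sum fun k _ => (hasFDerivAt_coord x k).const_mul _

/-- `d(Q^p) = p Q^{p-2} ⟨A x, ·⟩` away from the origin. -/
lemma hasFDerivAt_Qpow (hA : A.PosDef) (p : ℝ) {x : EuclideanSpace ℝ (Fin n)} (hx : x ≠ 0) :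
    HasFDerivAt (fun y => Qfun A y ^ p)
      ((p * Qfun A x ^ (p - 2)) •
        ∑ k, Avec A x k • (EuclideanSpace.proj k : EuclideanSpace ℝ (Fin n) →L[ℝ] ℝ)) x := by
  have hQ := Qfun_pos hA hx
  have hq := quad_pos hA hx
  have h1 : HasFDerivAt (fun y : EuclideanSpace ℝ (Fin n) => ∑ i, ∑ j, A i j * y i * y j)
      ((2 : ℝ) • ∑ k, Avec A x k •
        (EuclideanSpace.proj k : EuclideanSpace ℝ (Fin n) →L[ℝ] ℝ)) x := by
    have h := HasFDerivAt.fun_sum (u := Finset.univ) fun (i : Fin n) _ =>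
      (hasFDerivAt_coord x i).mul (hasFDerivAt_Avec (A := A) x i)
    have hf : (fun y : EuclideanSpace ℝ (Fin n) => ∑ i, ∑ j, A i j * y i * y j)
        = fun y => ∑ i, y i * Avec A y i := funext quad_eq
    rw [hf]
    refine h.congr_fderiv ?_
    ext v
    have hsymm : ∀ k l, A k l = A l k := fun k l => by simpa using hA.1.apply l k
    have hswap : ∑ i, x i * ∑ k, A i k * v k = ∑ k, Avec A x k * v k := by
      simp only [Avec, Finset.mul_sum, Finset.sum_mul]
      rw [Finset.sum_comm]
      exact Finset.sum_congr rfl fun i _ => Finset.sum_congr rfl fun j _ => by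
        rw [hsymm i j]; ring
    simp [Finset.sum_add_distrib, hswap, two_mul]
  have h2 := (h1.sqrt (by rw [quad_eq]; exact hq.ne')).rpow_const (p := p)
    (Or.inl (by rw [quad_eq]; exact (Real.sqrt_pos.2 hq).ne'))
  refine h2.congr_fderiv ?_
  change (p * Qfun A x ^ (p - 1)) • (1 / (2 * Qfun A x)) • (2 : ℝ) • _ = _
  rw [smul_smul, smul_smul]
  congr 1
  have : Qfun A x ^ (p - 1) = Qfun A x ^ (p - 2) * Qfun A x := by
    rw [← Real.rpow_add_one hQ.ne']; congr 1; ring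
  rw [this]
  field_simp

lemma gradient_psi (hA : A.PosDef) (p r : ℝ) {x : EuclideanSpace ℝ (Fin n)} (hx : x ≠ 0)
    (j : Fin n) :
    gradient (fun y => Qfun A y ^ p - Qfun A y ^ r) x j
      = (p * Qfun A x ^ (p - 2) - r * Qfun A x ^ (r - 2)) * Avec A x j := by
  have h := (hasFDerivAt_Qpow hA p hx).fun_sub (hasFDerivAt_Qpow hA r hx)
  have h1 : gradient (fun y => Qfun A y ^ p - Qfun A y ^ r) x j
      = inner ℝ (gradient (fun y => Qfun A y ^ p - Qfun A y ^ r) x)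
        (EuclideanSpace.single j (1 : ℝ)) := by
    rw [EuclideanSpace.inner_single_right]; simp
  rw [h1, inner_gradient_left, h.fderiv]
  simp
  ring

/-- The second partial derivatives of a difference of two powers of `Q`. -/
lemma pdd_psi (hA : A.PosDef) (p r : ℝ) {x : EuclideanSpace ℝ (Fin n)} (hx : x ≠ 0)
    (i j : Fin n) :
    pdd (fun y => Qfun A y ^ p - Qfun A y ^ r) i j x = hess A p i j x - hess A r i j x := by
  -- the gradient formula holds near `x`, so it may be differentiated
  have hev : (fun y => gradient (fun y => Qfun A y ^ p - Qfun A y ^ r) y j) =ᶠ[nhds x]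
      fun y => (p * Qfun A y ^ (p - 2) - r * Qfun A y ^ (r - 2)) * Avec A y j := by
    filter_upwards [isOpen_ne.mem_nhds hx] with y hy
    exact gradient_psi hA p r hy j
  have hd := (((hasFDerivAt_Qpow hA (p - 2) hx).const_mul p).fun_sub
    ((hasFDerivAt_Qpow hA (r - 2) hx).const_mul r)).fun_mul (hasFDerivAt_Avec (A := A) x j)
  have hsymm : A j i = A i j := by simpa using hA.1.apply i j
  rw [pdd, hev.fderiv_eq, hd.fderiv]
  have e1 : p - 2 - 2 = p - 4 := by ring
  have e2 : r - 2 - 2 = r - 4 := by ring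
  simp [hess, hsymm, e1, e2]
  ring

lemma sum_mul_Avec {M : Matrix (Fin n) (Fin n) ℝ} (hMA : M * A = 1)
    (x : EuclideanSpace ℝ (Fin n)) (i : Fin n) : ∑ j, M i j * Avec A x j = x i := by
  have h : M.mulVec (A.mulVec x.ofLp) = x.ofLp := by
    rw [Matrix.mulVec_mulVec, hMA, Matrix.one_mulVec]
  simpa [Matrix.mulVec, dotProduct, Avec] using congrFun h i

/-- `Q^p` contracted against the inverse matrix `M = A⁻¹`: `∑ Mᵢⱼ ∂ᵢⱼ Q^p = p (p+n-2) Q^{p-2}`. -/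
lemma sum_ainf_hess (hA : A.PosDef) {M : Matrix (Fin n) (Fin n) ℝ} (hMA : M * A = 1) (p : ℝ)
    {x : EuclideanSpace ℝ (Fin n)} (hx : x ≠ 0) :
    ∑ i, ∑ j, M i j * hess A p i j x = p * (p + n - 2) * Qfun A x ^ (p - 2) := by
  have hQ := Qfun_pos hA hx
  have hsymm : ∀ k l, A k l = A l k := fun k l => by simpa using hA.1.apply l k
  have htr : ∑ i, ∑ j, M i j * A i j = n := by
    have : Matrix.trace (M * A) = n := by rw [hMA]; simp
    rw [← this, Matrix.trace]
    refine Finset.sum_congr rfl fun i _ => ?_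
    rw [Matrix.diag_apply, Matrix.mul_apply]
    exact Finset.sum_congr rfl fun j _ => by rw [hsymm i j]
  have hMv := sum_mul_Avec hMA x
  have hqd : ∑ i, ∑ j, M i j * (Avec A x i * Avec A x j) = Qfun A x ^ 2 := by
    rw [Qfun_sq hA hx]
    refine Finset.sum_congr rfl fun i _ => ?_
    calc ∑ j, M i j * (Avec A x i * Avec A x j) = (∑ j, M i j * Avec A x j) * Avec A x i := by
          rw [Finset.sum_mul]
          exact Finset.sum_congr rfl fun j _ => by ring
      _ = x i * Avec A x i := by rw [hMv i]
  have hsplit : ∑ i, ∑ j, M i j * hess A p i j x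
      = p * Qfun A x ^ (p - 2) * (∑ i, ∑ j, M i j * A i j)
        + p * (p - 2) * Qfun A x ^ (p - 4) *
          ∑ i, ∑ j, M i j * (Avec A x i * Avec A x j) := by
    simp only [hess, Finset.mul_sum, ← Finset.sum_add_distrib]
    exact Finset.sum_congr rfl fun i _ => Finset.sum_congr rfl fun j _ => by ring
  have hpow : Qfun A x ^ (p - 2) = Qfun A x ^ (p - 4) * Qfun A x ^ 2 := by
    rw [← Real.rpow_add_natCast hQ.ne']; congr 1; push_cast; ring
  rw [hsplit, htr, hqd, hpow]
  ring

/-! ### Size estimates -/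

lemma abs_Avec_le (hA : A.PosDef) {x : EuclideanSpace ℝ (Fin n)} (hx : x ≠ 0) (i : Fin n) :
    |Avec A x i| ≤ √(A i i) * Qfun A x := by
  have hQ := Qfun_pos hA hx
  apply abs_le_of_sq_le_sq _ (by positivity)
  rw [mul_pow, Real.sq_sqrt hA.diag_pos.le, Qfun_sq hA hx]
  exact mulVec_sq_le hA x.ofLp i

lemma Qfun_le (hA : A.PosDef) {x : EuclideanSpace ℝ (Fin n)} (hx : x ≠ 0) :
    Qfun A x ≤ (∑ i, √(A i i)) * ‖x‖ := by
  have hQ := Qfun_pos hA hx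
  have h : Qfun A x * Qfun A x ≤ ((∑ i, √(A i i)) * ‖x‖) * Qfun A x := by
    rw [← sq, Qfun_sq hA hx, Finset.sum_mul, Finset.sum_mul]
    refine Finset.sum_le_sum fun i _ => ?_
    have h1 : |x i| ≤ ‖x‖ := by simpa using PiLp.norm_apply_le x i
    calc x i * Avec A x i ≤ |x i| * |Avec A x i| := by rw [← abs_mul]; exact le_abs_self _
      _ ≤ ‖x‖ * (√(A i i) * Qfun A x) :=
        mul_le_mul h1 (abs_Avec_le hA hx i) (abs_nonneg _) (norm_nonneg _)
      _ = _ := by ring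
  exact le_of_mul_le_mul_right h hQ

lemma norm_sq_le (hA : A.PosDef) {M : Matrix (Fin n) (Fin n) ℝ} (hM : M.PosDef)
    (hMA : M * A = 1) {x : EuclideanSpace ℝ (Fin n)} (hx : x ≠ 0) :
    ‖x‖ ^ 2 ≤ M.trace * Qfun A x ^ 2 := by
  have hMv := sum_mul_Avec hMA x
  rw [EuclideanSpace.real_norm_sq_eq, Matrix.trace, Finset.sum_mul]
  refine Finset.sum_le_sum fun i _ => ?_
  have h := mulVec_sq_le hM (Avec A x) i
  simp only [hMv] at h
  rw [Qfun_sq hA hx]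
  simpa [mul_comm] using h

/-- `|∂ᵢⱼ Q^p| ≤ K Q^{p-2}` with `K` depending only on `A` and `p`. -/
lemma abs_hess_le (hA : A.PosDef) (p : ℝ) {x : EuclideanSpace ℝ (Fin n)} (hx : x ≠ 0)
    (i j : Fin n) :
    |hess A p i j x| ≤ (|p| * (∑ k, ∑ l, |A k l|) + |p * (p - 2)| * (∑ k, √(A k k)) ^ 2)
      * Qfun A x ^ (p - 2) := by
  have hQ := Qfun_pos hA hx
  have hT : |A i j| ≤ ∑ k, ∑ l, |A k l| :=
    (Finset.single_le_sum (f := fun l => |A i l|) (fun _ _ => abs_nonneg _)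
      (Finset.mem_univ j)).trans
      (Finset.single_le_sum (f := fun k => ∑ l, |A k l|)
        (fun _ _ => Finset.sum_nonneg fun _ _ => abs_nonneg _) (Finset.mem_univ i))
  set S := ∑ k, √(A k k) with hS
  have hS0 : 0 ≤ S := Finset.sum_nonneg fun _ _ => Real.sqrt_nonneg _
  have hv : ∀ k, |Avec A x k| ≤ S * Qfun A x := fun k =>
    (abs_Avec_le hA hx k).trans (mul_le_mul_of_nonneg_right
      (Finset.single_le_sum (f := fun k => √(A k k)) (fun _ _ => Real.sqrt_nonneg _)
        (Finset.mem_univ k)) hQ.le)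
  have hpow : Qfun A x ^ (p - 2) = Qfun A x ^ (p - 4) * Qfun A x ^ 2 := by
    rw [← Real.rpow_add_natCast hQ.ne']; congr 1; push_cast; ring
  have h2 : 0 < Qfun A x ^ (p - 2) := Real.rpow_pos_of_pos hQ _
  have h4 : 0 < Qfun A x ^ (p - 4) := Real.rpow_pos_of_pos hQ _
  calc |hess A p i j x|
      ≤ |p| * Qfun A x ^ (p - 2) * |A i j|
        + |p * (p - 2)| * Qfun A x ^ (p - 4) * (|Avec A x i| * |Avec A x j|) := by
        refine (abs_add_le _ _).trans (le_of_eq ?_)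
        simp only [abs_mul, abs_of_pos h2, abs_of_pos h4]
    _ ≤ |p| * Qfun A x ^ (p - 2) * (∑ k, ∑ l, |A k l|)
        + |p * (p - 2)| * Qfun A x ^ (p - 4) * ((S * Qfun A x) * (S * Qfun A x)) := by
        gcongr
        · exact hv i
        · exact hv j
    _ = _ := by rw [hpow]; ring

end

/-! ### Conclusion -/

/-- **Lemma 2.1:** for the comparison function `ψ = Q^{2-n} - Q^{2-n-β}` and
coefficients `aᵢⱼ(x)` converging to the constant symmetric positive definite
matrix `aᵢⱼ^∞` at rate `|x|^{-1-σ}`, one has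
`∑ aᵢⱼ ∂ᵢⱼ ψ = -β(n-2+β) Q^{-n-β} + O(Q^{-n-1-σ})` on `{|x| ≥ R}`. -/
theorem stmt2 (n : ℕ) (hn : 3 ≤ n)
    (ainf : Matrix (Fin n) (Fin n) ℝ) (hainf_pd : ainf.PosDef)
    (A : Matrix (Fin n) (Fin n) ℝ) (hA : ainf * A = 1)
    (β : ℝ) (hβ0 : 0 < β) (hβ1 : β < 1)
    (R : ℝ) (hR : 0 < R)
    (a : Fin n → Fin n → EuclideanSpace ℝ (Fin n) → ℝ)
    (ha_symm : ∀ x i j, a i j x = a j i x)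
    (C σ : ℝ) (hC : 0 < C) (hσ : 0 < σ)
    (ha_conv : ∀ (x : EuclideanSpace ℝ (Fin n)), R ≤ ‖x‖ → ∀ i j,
      |a i j x - ainf i j| ≤ C * ‖x‖ ^ (-(1 + σ))) :
    ∃ C' > 0, ∀ x : EuclideanSpace ℝ (Fin n), R ≤ ‖x‖ →
      |(∑ i, ∑ j, a i j x *
          pdd (fun y => Qfun A y ^ ((2 : ℝ) - n) - Qfun A y ^ ((2 : ℝ) - n - β)) i j x)
        + β * ((n : ℝ) - 2 + β) * Qfun A x ^ (-(n : ℝ) - β)|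
      ≤ C' * Qfun A x ^ (-(n : ℝ) - 1 - σ) := by
  have hAinv : A = ainf⁻¹ := (Matrix.inv_eq_right_inv hA).symm
  have hApd : A.PosDef := hAinv ▸ hainf_pd.inv
  have hnpos : 0 < n := by omega
  have : Nonempty (Fin n) := ⟨⟨0, hnpos⟩⟩
  set S := ∑ k, √(A k k) with hS
  have hS0 : 0 < S :=
    Finset.sum_pos (fun k _ => Real.sqrt_pos.2 hApd.diag_pos) Finset.univ_nonempty
  have htr : 0 < ainf.trace :=
    Finset.sum_pos (fun k _ => hainf_pd.diag_pos) Finset.univ_nonempty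
  set p : ℝ := 2 - n with hp
  set r : ℝ := 2 - n - β with hr
  set K : ℝ → ℝ := fun s => |s| * (∑ k, ∑ l, |A k l|) + |s * (s - 2)| * S ^ 2 with hK
  have hK0 : ∀ s, 0 ≤ K s := fun s => by
    have : 0 ≤ ∑ k, ∑ l, |A k l| :=
      Finset.sum_nonneg fun _ _ => Finset.sum_nonneg fun _ _ => abs_nonneg _
    positivity
  -- lower bound of `Q` on the region `|x| ≥ R`
  set q0 : ℝ := R / √ainf.trace with hq0
  have hq0pos : 0 < q0 := div_pos hR (Real.sqrt_pos.2 htr)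
  set E : ℝ := K p + K r * q0 ^ (-β) with hE
  have hE0 : 0 ≤ E := add_nonneg (hK0 p) (mul_nonneg (hK0 r) (Real.rpow_nonneg hq0pos.le _))
  refine ⟨(n : ℝ) * (n * (C * S ^ (1 + σ) * E)) + 1, by positivity, fun x hxR => ?_⟩
  have hxn : 0 < ‖x‖ := hR.trans_le hxR
  have hx : x ≠ 0 := norm_pos_iff.1 hxn
  set Q := Qfun A x with hQdef
  have hQ : 0 < Q := Qfun_pos hApd hx
  have hq0Q : q0 ≤ Q := by
    rw [hq0, div_le_iff₀ (Real.sqrt_pos.2 htr)]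
    refine hxR.trans ((sq_le_sq₀ hxn.le (by positivity)).1 ?_)
    rw [mul_pow, Real.sq_sqrt htr.le, mul_comm]
    exact norm_sq_le hApd hainf_pd hA hx
  have hpd : ∀ i j, pdd (fun y => Qfun A y ^ p - Qfun A y ^ r) i j x
      = hess A p i j x - hess A r i j x := fun i j => pdd_psi hApd p r hx i j
  have hmain : ∑ i, ∑ j, ainf i j * (hess A p i j x - hess A r i j x)
      = - (β * ((n : ℝ) - 2 + β) * Q ^ (-(n : ℝ) - β)) := by
    simp only [mul_sub, Finset.sum_sub_distrib]
    rw [sum_ainf_hess hApd hA p hx, sum_ainf_hess hApd hA r hx]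
    have : r - 2 = -(n : ℝ) - β := by rw [hr]; ring
    rw [this, ← hQdef, hp, hr]
    ring
  -- the leading terms cancel, leaving only the deviation of the coefficients
  have hdiff : (∑ i, ∑ j, a i j x * pdd (fun y => Qfun A y ^ p - Qfun A y ^ r) i j x)
        + β * ((n : ℝ) - 2 + β) * Q ^ (-(n : ℝ) - β)
      = ∑ i, ∑ j, (a i j x - ainf i j) * (hess A p i j x - hess A r i j x) := by
    simp only [hpd, sub_mul, Finset.sum_sub_distrib (f := fun j => a _ j x * _),
      Finset.sum_sub_distrib]
    rw [hmain]
    ring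
  have hhess : ∀ i j, |hess A p i j x - hess A r i j x| ≤ E * Q ^ (-(n : ℝ)) := fun i j => by
    have e1 : _ ≤ K p * Q ^ (p - 2) := abs_hess_le hApd p hx i j
    have e2 : _ ≤ K r * Q ^ (r - 2) := abs_hess_le hApd r hx i j
    have x1 : p - 2 = -(n : ℝ) := by rw [hp]; ring
    have x2 : r - 2 = -β + -(n : ℝ) := by rw [hr]; ring
    rw [x1] at e1
    rw [x2, Real.rpow_add hQ] at e2
    have e3 : Q ^ (-β) ≤ q0 ^ (-β) :=
      Real.rpow_le_rpow_of_nonpos hq0pos hq0Q (by linarith)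
    have hQn : 0 < Q ^ (-(n : ℝ)) := Real.rpow_pos_of_pos hQ _
    have e4 : K r * (Q ^ (-β) * Q ^ (-(n : ℝ))) ≤ K r * (q0 ^ (-β) * Q ^ (-(n : ℝ))) :=
      mul_le_mul_of_nonneg_left (mul_le_mul_of_nonneg_right e3 hQn.le) (hK0 r)
    calc |hess A p i j x - hess A r i j x| ≤ |hess A p i j x| + |hess A r i j x| := abs_sub _ _
      _ ≤ K p * Q ^ (-(n : ℝ)) + K r * (q0 ^ (-β) * Q ^ (-(n : ℝ))) :=
        add_le_add e1 (e2.trans e4)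
      _ = E * Q ^ (-(n : ℝ)) := by rw [hE]; ring
  have hcoef : ∀ i j, |a i j x - ainf i j| ≤ C * S ^ (1 + σ) * Q ^ (-(1 + σ)) := fun i j => by
    refine (ha_conv x hxR i j).trans ?_
    have h1 : Q / S ≤ ‖x‖ := by
      rw [div_le_iff₀ hS0, mul_comm]; exact Qfun_le hApd hx
    have h2 : ‖x‖ ^ (-(1 + σ)) ≤ (Q / S) ^ (-(1 + σ)) :=
      Real.rpow_le_rpow_of_nonpos (by positivity) h1 (by linarith)
    rw [Real.div_rpow hQ.le hS0.le, Real.rpow_neg hS0.le, div_inv_eq_mul] at h2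
    calc C * ‖x‖ ^ (-(1 + σ)) ≤ C * (Q ^ (-(1 + σ)) * S ^ (1 + σ)) := by gcongr
      _ = _ := by ring
  have hterm : ∀ i j, |(a i j x - ainf i j) * (hess A p i j x - hess A r i j x)|
      ≤ C * S ^ (1 + σ) * E * Q ^ (-(n : ℝ) - 1 - σ) := fun i j => by
    rw [abs_mul]
    have hpow : Q ^ (-(n : ℝ) - 1 - σ) = Q ^ (-(1 + σ)) * Q ^ (-(n : ℝ)) := by
      rw [← Real.rpow_add hQ]; congr 1; ring
    calc _ ≤ (C * S ^ (1 + σ) * Q ^ (-(1 + σ))) * (E * Q ^ (-(n : ℝ))) :=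
        mul_le_mul (hcoef i j) (hhess i j) (abs_nonneg _) (by positivity)
      _ = _ := by rw [hpow]; ring
  rw [hdiff]
  calc _ ≤ ∑ i : Fin n, ∑ j : Fin n, C * S ^ (1 + σ) * E * Q ^ (-(n : ℝ) - 1 - σ) :=
        (Finset.abs_sum_le_sum_abs _ _).trans (Finset.sum_le_sum fun i _ =>
          (Finset.abs_sum_le_sum_abs _ _).trans (Finset.sum_le_sum fun j _ => hterm i j))
    _ = (n : ℝ) * (n * (C * S ^ (1 + σ) * E)) * Q ^ (-(n : ℝ) - 1 - σ) := by
        simp; ring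
    _ ≤ _ := by
        have : 0 < Q ^ (-(n : ℝ) - 1 - σ) := Real.rpow_pos_of_pos hQ _
        nlinarith
end

section
/- Let n ≥ 3 and let A = (a_ij) : ℝⁿ → ℝ^{n×n} be symmetric-matrix-valued, locally Lipschitz, and uniformly elliptic with constants 0 < λ ≤ Λ. Suppose φ ∈ C²(Ω_R), where Ω_R = {x ∈ ℝⁿ : |x| ≥ R}, satisfies ∑_{i,j} a_ij(∇φ)∂_{ij}φ = 0 and |∇φ(x) − u^∞| ≤ C|x|^{−1−σ} for some u^∞ ∈ ℝⁿ, C > 0, σ > 0. Let Φ(x) = φ(x) − u^∞·x − c₀, where c₀ is the unique constant making Φ(x) → 0 as |x| → ∞. Then there exist R' ≥ R and a constant C₁ > 0 such that |Φ(x)| ≤ C₁ |x|^{2−n} for all x ∈ Ω_{R'}. -/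
/-!
The estimate is a comparison with an explicit barrier in the exterior of a large ball.

Let `A` be the coefficient matrix frozen at `u∞`, `B = A⁻¹` and `Q(x) = ⟪B x, x⟫ ^ (1/2)`. The
frozen operator satisfies `∑ Aᵢⱼ ∂ᵢⱼ Q^p = p (p + n - 2) Q^(p-2)`, so it annihilates `Q^(2-n)` and
maps the barrier `ψ = Q^(2-n) - Q^(1-n)` to `-(n-1) Q^(-n-1) < 0`. By the Lipschitz bound and the
decay of `∇φ - u∞`, the true coefficients `aᵢⱼ(∇φ(x))` differ from `A` by `O(|x|^(-1-σ))`, which is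
`o(1 / Q)`; hence `ψ` is still a strict supersolution far out (`barrier_strict`).

The function `Φ = φ - ⟪u∞, ·⟫ - c₀` has the same second derivatives as `φ`, so `M ψ ± Φ` are strict
supersolutions too. They are nonnegative on the inner sphere if `M` is large, and asymptotically
nonnegative at infinity because `Φ → 0`. A negative value would therefore produce an interior local
minimum (`exterior_nonneg`), where the Hessian is nonnegative (`second_order_nonneg`) and its
contraction with the positive semidefinite coefficients is nonnegative (`ellTrace_nonneg`). This
contradicts strictness, so `|Φ| ≤ M ψ ≤ M Q^(2-n)`, which is comparable to `|x|^(2-n)`. The powers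
of `Q` appear below as powers of the quadratic form `⟪B x, x⟫`, with halved exponents.
-/

open scoped BigOperators RealInnerProductSpace

/-! ### Contractions, second derivatives at a minimum, and the inverse form -/

/-- The contraction `∑ aᵢⱼ Dᵢⱼ` of a coefficient matrix with a second derivative `D`, where `D`
is the derivative of a gradient field and `Dᵢⱼ` is the `j`-th coordinate of `D eᵢ`. -/
noncomputable def ellTrace {n : ℕ} (A : Matrix (Fin n) (Fin n) ℝ)
    (D : EuclideanSpace ℝ (Fin n) →L[ℝ] EuclideanSpace ℝ (Fin n)) : ℝ :=
  ∑ i, ∑ j, A i j * (D (EuclideanSpace.single i 1)) j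

lemma ellTrace_add {n : ℕ} (A : Matrix (Fin n) (Fin n) ℝ)
    (D D' : EuclideanSpace ℝ (Fin n) →L[ℝ] EuclideanSpace ℝ (Fin n)) :
    ellTrace A (D + D') = ellTrace A D + ellTrace A D' := by
  simp [ellTrace, mul_add, Finset.sum_add_distrib]

lemma ellTrace_smul {n : ℕ} (A : Matrix (Fin n) (Fin n) ℝ) (c : ℝ)
    (D : EuclideanSpace ℝ (Fin n) →L[ℝ] EuclideanSpace ℝ (Fin n)) :
    ellTrace A (c • D) = c * ellTrace A D := by
  simp only [ellTrace, Finset.mul_sum]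
  refine Finset.sum_congr rfl fun i _ => Finset.sum_congr rfl fun j _ => ?_
  simp; ring

lemma ellTrace_smulRight {n : ℕ} (A : Matrix (Fin n) (Fin n) ℝ) (v w : EuclideanSpace ℝ (Fin n)) :
    ellTrace A ((innerSL ℝ v).smulRight w) = ∑ i, ∑ j, A i j * v i * w j := by
  simp only [ellTrace]
  refine Finset.sum_congr rfl fun i _ => Finset.sum_congr rfl fun j _ => ?_
  simp [EuclideanSpace.inner_single_right, mul_assoc]

lemma posSemidef_of_form {n : ℕ} (A : Matrix (Fin n) (Fin n) ℝ) (hs : ∀ i j, A i j = A j i)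
    (h : ∀ ξ : EuclideanSpace ℝ (Fin n), 0 ≤ ∑ i, ∑ j, A i j * ξ i * ξ j) : A.PosSemidef := by
  refine Matrix.PosSemidef.of_dotProduct_mulVec_nonneg ?_ ?_
  · ext i j; exact hs j i
  · intro x
    have := h (WithLp.toLp 2 x)
    simp only [dotProduct, Matrix.mulVec, Finset.mul_sum]
    refine this.trans_eq (Finset.sum_congr rfl fun i _ => Finset.sum_congr rfl fun j _ => ?_)
    simp only [Pi.star_apply, star_trivial]
    ring

/-- The contraction of a positive semidefinite matrix with a nonnegative quadratic form is
nonnegative: write the matrix as a sum of rank-one matrices `b bᵀ`. -/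
lemma ellTrace_nonneg {n : ℕ} (A : Matrix (Fin n) (Fin n) ℝ) (hA : A.PosSemidef)
    (D : EuclideanSpace ℝ (Fin n) →L[ℝ] EuclideanSpace ℝ (Fin n))
    (hD : ∀ v, 0 ≤ ⟪D v, v⟫) : 0 ≤ ellTrace A D := by
  obtain ⟨m, B, hB⟩ := Matrix.posSemidef_iff_eq_sum_vecMulVec.mp hA
  have key : ellTrace A D = ∑ k, ⟪D (WithLp.toLp 2 (B k)), WithLp.toLp 2 (B k)⟫ := by
    have hv : ∀ k, D (WithLp.toLp 2 (B k)) =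
        ∑ i, B k i • D (EuclideanSpace.single i 1) := by
      intro k
      rw [← (EuclideanSpace.basisFun (Fin n) ℝ).sum_repr (WithLp.toLp 2 (B k))]
      simp
    simp only [hv, PiLp.inner_apply, ellTrace, hB, Matrix.sum_apply, Matrix.vecMulVec_apply]
    simp only [Finset.sum_mul]
    rw [Finset.sum_congr rfl fun i _ => Finset.sum_comm, Finset.sum_comm]
    refine Finset.sum_congr rfl fun k _ => ?_
    rw [Finset.sum_comm]
    refine Finset.sum_congr rfl fun i _ => ?_
    simp [Finset.mul_sum]
    refine Finset.sum_congr rfl fun k _ => ?_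
    ring
  rw [key]
  exact Finset.sum_nonneg fun k _ => hD _

/-- Second-order necessary condition at a local minimum. If some second directional derivative
were negative, the second-derivative test would make the point a local maximum along that line
too, so the function would be constant there and the derivative would vanish. -/
lemma second_order_nonneg {n : ℕ} {G : EuclideanSpace ℝ (Fin n) → ℝ}
    {g : EuclideanSpace ℝ (Fin n) → EuclideanSpace ℝ (Fin n)} {x : EuclideanSpace ℝ (Fin n)}
    {D : EuclideanSpace ℝ (Fin n) →L[ℝ] EuclideanSpace ℝ (Fin n)}
    (hg : ∀ᶠ y in nhds x, HasGradientAt G (g y) y) (hD : HasFDerivAt g D x)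
    (hmin : IsLocalMin G x) (v : EuclideanSpace ℝ (Fin n)) : 0 ≤ ⟪D v, v⟫ := by
  by_contra! hneg
  set f : ℝ → ℝ := fun t => G (x + t • v) with hf
  have hline : ∀ t : ℝ, HasDerivAt (fun t : ℝ => x + t • v) v t := fun t => by
    simpa using ((hasDerivAt_id t).smul_const v).const_add x
  have hlim : Filter.Tendsto (fun t : ℝ => x + t • v) (nhds 0) (nhds x) := by
    have : Continuous (fun t : ℝ => x + t • v) := by fun_prop
    simpa using this.tendsto 0
  have hf1 : ∀ᶠ t in nhds (0 : ℝ), HasDerivAt f ⟪g (x + t • v), v⟫ t := by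
    filter_upwards [hlim.eventually hg] with t ht
    have h1 := ht.hasFDerivAt.comp_hasDerivAt t (hline t)
    simp only [InnerProductSpace.toDual_apply_apply] at h1
    exact h1
  have hf1' : deriv f =ᶠ[nhds 0] fun t => ⟪g (x + t • v), v⟫ := hf1.mono fun t ht => ht.deriv
  have hf2 : deriv (deriv f) 0 = ⟪D v, v⟫ := by
    rw [hf1'.deriv_eq]
    have h1 : HasDerivAt (fun t : ℝ => g (x + t • v)) (D v) 0 := by
      have hD' : HasFDerivAt g D (x + (0 : ℝ) • v) := by simpa using hD
      exact hD'.comp_hasDerivAt 0 (hline 0)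
    simpa using (h1.inner ℝ (hasDerivAt_const (0 : ℝ) v)).deriv
  have hmin' : IsLocalMin f 0 := by
    have : ∀ᶠ t in nhds (0 : ℝ), G x ≤ G (x + t • v) := hlim.eventually hmin
    filter_upwards [this] with t ht
    simpa [hf] using ht
  have hmax := isLocalMax_of_deriv_deriv_neg (hf2 ▸ hneg) hmin'.deriv_eq_zero
    hf1.self_of_nhds.continuousAt
  have hconst : f =ᶠ[nhds 0] fun _ => f 0 := by
    filter_upwards [hmin', hmax] with t h1 h2 using le_antisymm h2 h1
  have hz : deriv (deriv f) 0 = 0 := by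
    rw [hconst.deriv.deriv_eq]; simp
  linarith

/-- The inverse of a positive definite matrix `A`, as an operator `B` on Euclidean space, with
the facts needed about the quadratic form `⟪B x, x⟫`. -/
lemma exists_inverse_form {n : ℕ} (A : Matrix (Fin n) (Fin n) ℝ) (hs : ∀ i j, A i j = A j i)
    (lam : ℝ) (hlam : 0 < lam)
    (h : ∀ ξ : EuclideanSpace ℝ (Fin n), lam * ‖ξ‖ ^ 2 ≤ ∑ i, ∑ j, A i j * ξ i * ξ j) :
    ∃ B : EuclideanSpace ℝ (Fin n) →L[ℝ] EuclideanSpace ℝ (Fin n),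
      (∀ x y, ⟪B x, y⟫ = ⟪x, B y⟫) ∧ (∃ c > 0, ∀ x, c * ‖x‖ ^ 2 ≤ ⟪B x, x⟫) ∧
      ellTrace A B = n ∧ ∀ x, ∑ i, ∑ j, A i j * B x i * B x j = ⟪B x, x⟫ := by
  have hpsd : A.PosSemidef := posSemidef_of_form A hs fun ξ => le_trans (by positivity) (h ξ)
  have hform : ∀ x : EuclideanSpace ℝ (Fin n),
      ∑ i, ∑ j, A i j * x i * x j = ⟪x, Matrix.toEuclideanCLM (𝕜 := ℝ) A x⟫ := by
    intro x
    simp only [PiLp.inner_apply, Matrix.ofLp_toEuclideanCLM, Matrix.mulVec, dotProduct]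
    refine Finset.sum_congr rfl fun i _ => ?_
    simp only [RCLike.inner_apply, conj_trivial, Finset.sum_mul]
    exact Finset.sum_congr rfl fun j _ => by ring
  have hinj : Function.Injective A.mulVec := by
    intro u v huv
    have h0 : A.mulVec (u - v) = 0 := by rw [Matrix.mulVec_sub, huv, sub_self]
    have h1 := h (WithLp.toLp 2 (u - v))
    rw [hform, Matrix.toEuclideanCLM_toLp, h0] at h1
    simp only [WithLp.toLp_zero, inner_zero_right] at h1
    have h2 : ‖(WithLp.toLp 2 (u - v) : EuclideanSpace ℝ (Fin n))‖ = 0 := by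
      by_contra hne
      have : 0 < ‖(WithLp.toLp 2 (u - v) : EuclideanSpace ℝ (Fin n))‖ ^ 2 := by positivity
      nlinarith
    have h3 := congrArg WithLp.ofLp (norm_eq_zero.mp h2)
    exact sub_eq_zero.mp (by simpa using h3)
  have hunit : IsUnit A := Matrix.mulVec_injective_iff_isUnit.mp hinj
  have hdet : IsUnit A.det := (Matrix.isUnit_iff_isUnit_det A).mp hunit
  have hAB : A * A⁻¹ = 1 := Matrix.mul_nonsing_inv A hdet
  have hsi : ∀ i j, A⁻¹ i j = A⁻¹ j i := by
    have h1 : A.transpose = A := by ext i j; simp [hs i j]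
    have h2 : (A⁻¹).transpose = A⁻¹ := by rw [Matrix.transpose_nonsing_inv, h1]
    intro i j
    conv_lhs => rw [← h2]
    rfl
  set T := Matrix.toEuclideanCLM (𝕜 := ℝ) A with hT
  set B := Matrix.toEuclideanCLM (𝕜 := ℝ) A⁻¹ with hB
  have hTB : ∀ x, T (B x) = x := by
    intro x
    have : T * B = 1 := by rw [hT, hB, ← map_mul, hAB, map_one]
    simpa using congrArg (fun F => F x) this
  have hq : ∀ x, ∑ i, ∑ j, A i j * B x i * B x j = ⟪B x, x⟫ := fun x => by
    rw [hform, hTB]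
  refine ⟨B, ?_, ⟨lam / (‖T‖ + 1) ^ 2, by positivity, ?_⟩, ?_, hq⟩
  · intro x y
    simp only [PiLp.inner_apply, hB, Matrix.ofLp_toEuclideanCLM, Matrix.mulVec, dotProduct,
      RCLike.inner_apply, conj_trivial, Finset.mul_sum, Finset.sum_mul]
    rw [Finset.sum_comm]
    refine Finset.sum_congr rfl fun i _ => Finset.sum_congr rfl fun j _ => ?_
    rw [hsi i j]; ring
  · intro x
    have h1 := h (B x)
    rw [hq] at h1
    refine le_trans ?_ h1
    have h2 : ‖x‖ ≤ (‖T‖ + 1) * ‖B x‖ := by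
      calc ‖x‖ = ‖T (B x)‖ := by rw [hTB]
        _ ≤ ‖T‖ * ‖B x‖ := T.le_opNorm _
        _ ≤ _ := by gcongr; linarith
    rw [div_mul_eq_mul_div, div_le_iff₀ (by positivity), mul_assoc, ← mul_pow, mul_comm ‖B x‖]
    gcongr
  · have h1 : ellTrace A B = (A * A⁻¹).trace := by
      simp only [ellTrace, Matrix.trace, Matrix.diag_apply, Matrix.mul_apply]
      refine Finset.sum_congr rfl fun i _ => Finset.sum_congr rfl fun j _ => ?_
      simp [hB, Matrix.ofLp_toEuclideanCLM]
    rw [h1, hAB]; simp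

/-! ### Powers of a quadratic form and the barrier -/

/-- The second derivative of `x ↦ ⟪B x, x⟫ ^ p` for a symmetric operator `B`. -/
noncomputable def formHess {n : ℕ} (B : EuclideanSpace ℝ (Fin n) →L[ℝ] EuclideanSpace ℝ (Fin n))
    (p : ℝ) (x : EuclideanSpace ℝ (Fin n)) :
    EuclideanSpace ℝ (Fin n) →L[ℝ] EuclideanSpace ℝ (Fin n) :=
  (2 * p * ⟪B x, x⟫ ^ (p - 1)) • B +
    (4 * p * (p - 1) * ⟪B x, x⟫ ^ (p - 2)) • (innerSL ℝ (B x)).smulRight (B x)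

lemma hasFDerivAt_form_rpow {n : ℕ}
    {B : EuclideanSpace ℝ (Fin n) →L[ℝ] EuclideanSpace ℝ (Fin n)}
    (hB : ∀ x y, ⟪B x, y⟫ = ⟪x, B y⟫) (p : ℝ) {x : EuclideanSpace ℝ (Fin n)}
    (hx : 0 < ⟪B x, x⟫) :
    HasFDerivAt (fun y => ⟪B y, y⟫ ^ p) ((2 * p * ⟪B x, x⟫ ^ (p - 1)) • innerSL ℝ (B x)) x := by
  have h := ((B.hasFDerivAt (x := x)).inner ℝ (hasFDerivAt_id x)).rpow_const (p := p)
    (Or.inl hx.ne')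
  refine h.congr_fderiv ?_
  ext v
  have : ⟪B v, x⟫ = ⟪B x, v⟫ := by rw [hB, real_inner_comm]
  simp [this]
  ring

lemma hasGradientAt_form_rpow {n : ℕ}
    {B : EuclideanSpace ℝ (Fin n) →L[ℝ] EuclideanSpace ℝ (Fin n)}
    (hB : ∀ x y, ⟪B x, y⟫ = ⟪x, B y⟫) (p : ℝ) {x : EuclideanSpace ℝ (Fin n)}
    (hx : 0 < ⟪B x, x⟫) :
    HasGradientAt (fun y => ⟪B y, y⟫ ^ p) ((2 * p * ⟪B x, x⟫ ^ (p - 1)) • B x) x := by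
  rw [hasGradientAt_iff_hasFDerivAt]
  refine (hasFDerivAt_form_rpow hB p hx).congr_fderiv ?_
  ext v
  simp

lemma hasFDerivAt_gradient_form_rpow {n : ℕ}
    {B : EuclideanSpace ℝ (Fin n) →L[ℝ] EuclideanSpace ℝ (Fin n)}
    (hB : ∀ x y, ⟪B x, y⟫ = ⟪x, B y⟫) (p : ℝ) {x : EuclideanSpace ℝ (Fin n)}
    (hx : 0 < ⟪B x, x⟫) :
    HasFDerivAt (fun y => (2 * p * ⟪B y, y⟫ ^ (p - 1)) • B y) (formHess B p x) x := by
  have h := ((hasFDerivAt_form_rpow hB (p - 1) hx).const_mul (2 * p)).smul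
    (B.hasFDerivAt (x := x))
  refine h.congr_fderiv ?_
  have e : p - 1 - 1 = p - 2 := by ring
  ext1 v
  simp only [formHess, e, add_apply, smul_apply,
    ContinuousLinearMap.smulRight_apply, innerSL_apply_apply, smul_eq_mul, smul_smul]
  congr 2
  ring

lemma ellTrace_formHess {n : ℕ} (A : Matrix (Fin n) (Fin n) ℝ)
    (B : EuclideanSpace ℝ (Fin n) →L[ℝ] EuclideanSpace ℝ (Fin n))
    (p : ℝ) (x : EuclideanSpace ℝ (Fin n)) :
    ellTrace A (formHess B p x) = 2 * p * ⟪B x, x⟫ ^ (p - 1) * ellTrace A B +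
      4 * p * (p - 1) * ⟪B x, x⟫ ^ (p - 2) * ∑ i, ∑ j, A i j * B x i * B x j := by
  rw [formHess, ellTrace_add, ellTrace_smul, ellTrace_smul, ellTrace_smulRight]

lemma coord_abs_le {n : ℕ} (x : EuclideanSpace ℝ (Fin n)) (i : Fin n) : |x i| ≤ ‖x‖ := by
  simpa using PiLp.norm_apply_le x i

/-- An entrywise perturbation of size `ε` of the coefficients changes the two contractions that
occur in the second derivative of a power of `⟪B x, x⟫` by a relative error `O(ε)`. -/
lemma contraction_perturb {n : ℕ} (A : Matrix (Fin n) (Fin n) ℝ)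
    (B : EuclideanSpace ℝ (Fin n) →L[ℝ] EuclideanSpace ℝ (Fin n))
    (hc : ∃ c > 0, ∀ x, c * ‖x‖ ^ 2 ≤ ⟪B x, x⟫) :
    ∃ K : ℝ, 0 ≤ K ∧ ∀ (A' : Matrix (Fin n) (Fin n) ℝ) (ε : ℝ), 0 ≤ ε →
      (∀ i j, |A' i j - A i j| ≤ ε) →
      |ellTrace A' B - ellTrace A B| ≤ K * ε ∧
      ∀ x, |∑ i, ∑ j, A' i j * B x i * B x j - ∑ i, ∑ j, A i j * B x i * B x j|
        ≤ K * ε * ⟪B x, x⟫ := by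
  obtain ⟨c, hc0, hc⟩ := hc
  refine ⟨n ^ 2 * ‖B‖ + n ^ 2 * ‖B‖ ^ 2 / c, by positivity, fun A' ε hε hA' => ⟨?_, fun x => ?_⟩⟩
  · have h1 : |ellTrace A' B - ellTrace A B| ≤ ∑ i : Fin n, ∑ j : Fin n, ε * ‖B‖ := by
      simp only [ellTrace, ← Finset.sum_sub_distrib, ← sub_mul]
      refine (Finset.abs_sum_le_sum_abs _ _).trans (Finset.sum_le_sum fun i _ => ?_)
      refine (Finset.abs_sum_le_sum_abs _ _).trans (Finset.sum_le_sum fun j _ => ?_)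
      rw [abs_mul]
      refine mul_le_mul (hA' i j) ?_ (abs_nonneg _) hε
      refine (coord_abs_le _ j).trans ((B.le_opNorm _).trans ?_)
      simp
    refine h1.trans ?_
    have : 0 ≤ n ^ 2 * ‖B‖ ^ 2 / c * ε := by positivity
    simp
    nlinarith
  · have h1 : |∑ i, ∑ j, A' i j * B x i * B x j - ∑ i, ∑ j, A i j * B x i * B x j|
        ≤ ∑ i : Fin n, ∑ j : Fin n, ε * (‖B‖ * ‖x‖) * (‖B‖ * ‖x‖) := by
      simp only [← Finset.sum_sub_distrib, ← sub_mul]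
      refine (Finset.abs_sum_le_sum_abs _ _).trans (Finset.sum_le_sum fun i _ => ?_)
      refine (Finset.abs_sum_le_sum_abs _ _).trans (Finset.sum_le_sum fun j _ => ?_)
      rw [abs_mul, abs_mul]
      have hi := fun i => (coord_abs_le (B x) i).trans (B.le_opNorm x)
      exact mul_le_mul (mul_le_mul (hA' i j) (hi i) (abs_nonneg _) hε) (hi j) (abs_nonneg _)
        (by positivity)
    refine h1.trans ?_
    have h2 : ‖x‖ ^ 2 ≤ ⟪B x, x⟫ / c := by rw [le_div_iff₀ hc0, mul_comm]; exact hc x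
    have hq : 0 ≤ ⟪B x, x⟫ := le_trans (by positivity) (hc x)
    have h3 : (n : ℝ) ^ 2 * ‖B‖ ^ 2 * ε * ‖x‖ ^ 2 ≤ n ^ 2 * ‖B‖ ^ 2 * ε * (⟪B x, x⟫ / c) := by
      gcongr
    have h4 : 0 ≤ n ^ 2 * ‖B‖ * ε * ⟪B x, x⟫ := by positivity
    simp only [Finset.sum_const, Finset.card_univ, Fintype.card_fin, nsmul_eq_mul]
    calc (n : ℝ) * (n * (ε * (‖B‖ * ‖x‖) * (‖B‖ * ‖x‖)))
        = (n : ℝ) ^ 2 * ‖B‖ ^ 2 * ε * ‖x‖ ^ 2 := by ring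
      _ ≤ n ^ 2 * ‖B‖ ^ 2 * ε * (⟪B x, x⟫ / c) + n ^ 2 * ‖B‖ * ε * ⟪B x, x⟫ := by linarith
      _ = _ := by ring

/-- The scalar computation behind `barrier_strict`: `q = Q ^ 2`, and `T`, `S` are contractions
whose unperturbed values are `N` and `q`. -/
lemma barrier_scalar {N K ε q T S : ℝ} (hN : 3 ≤ N) (hK : 0 ≤ K) (hε : 0 ≤ ε) (hq : 1 ≤ q)
    (hsmall : ε * √q ≤ 1 / (2 * (N + 2) * (K + 1)))
    (h1 : |T - N| ≤ K * ε) (h2 : |S - q| ≤ K * ε * q) :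
    2 * ((2 - N) / 2) * q ^ ((2 - N) / 2 - 1) * T
        + 4 * ((2 - N) / 2) * ((2 - N) / 2 - 1) * q ^ ((2 - N) / 2 - 2) * S
      - (2 * ((1 - N) / 2) * q ^ ((1 - N) / 2 - 1) * T
        + 4 * ((1 - N) / 2) * ((1 - N) / 2 - 1) * q ^ ((1 - N) / 2 - 2) * S) < 0 := by
  have hq0 : 0 < q := by linarith
  obtain ⟨t, htdef⟩ : ∃ t, t = √q := ⟨_, rfl⟩
  rw [← htdef] at hsmall
  have ht1 : 1 ≤ t := htdef ▸ Real.one_le_sqrt.mpr hq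
  obtain ⟨P, hP⟩ : ∃ P, P = q ^ ((-1 - N) / 2) := ⟨_, rfl⟩
  have hP0 : 0 < P := hP ▸ Real.rpow_pos_of_pos hq0 _
  have ht : t = q ^ (1 / 2 : ℝ) := htdef.trans <| Real.sqrt_eq_rpow q
  have e1 : q ^ ((2 - N) / 2 - 1) = P * t := by
    rw [hP, ht, ← Real.rpow_add hq0]; ring_nf
  have e2 : q ^ ((2 - N) / 2 - 2) = P * t / q := by
    rw [← e1, ← Real.rpow_sub_one hq0.ne']; ring_nf
  have e3 : q ^ ((1 - N) / 2 - 1) = P := by rw [hP]; ring_nf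
  have e4 : q ^ ((1 - N) / 2 - 2) = P / q := by
    rw [← e3, ← Real.rpow_sub_one hq0.ne']; ring_nf
  rw [e1, e2, e3, e4]
  -- `e` and `f` are the relative errors of the two contractions.
  obtain ⟨e, he⟩ : ∃ e, e = T - N := ⟨_, rfl⟩
  obtain ⟨f, hf⟩ : ∃ f, f = (S - q) / q := ⟨_, rfl⟩
  have hT : T = N + e := by rw [he]; ring
  have hS : S = q * (1 + f) := by rw [hf]; field_simp; ring
  have he' : |e| ≤ K * ε := he ▸ h1
  have hf' : |f| ≤ K * ε := by
    rw [hf, abs_div, abs_of_pos hq0, div_le_iff₀ hq0]; exact h2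
  have key : 2 * ((2 - N) / 2) * (P * t) * T + 4 * ((2 - N) / 2) * ((2 - N) / 2 - 1) * (P * t / q) * S
      - (2 * ((1 - N) / 2) * P * T + 4 * ((1 - N) / 2) * ((1 - N) / 2 - 1) * (P / q) * S)
      = P * ((N - 2) * (t * (N * f - e)) + (N - 1) * (-1 + (e - (N + 1) * f))) := by
    rw [hT, hS]; field_simp; ring
  rw [key]
  refine mul_neg_of_pos_of_neg hP0 ?_
  have hKd : 2 * (N + 2) * (K * (ε * t)) < 1 := by
    have h3 : K * (ε * t) ≤ K * (1 / (2 * (N + 2) * (K + 1))) := by gcongr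
    have h4 : 2 * (N + 2) * (K * (1 / (2 * (N + 2) * (K + 1)))) = K / (K + 1) := by field_simp
    have h5 : K / (K + 1) < 1 := by rw [div_lt_one (by positivity)]; linarith
    calc _ ≤ 2 * (N + 2) * (K * (1 / (2 * (N + 2) * (K + 1)))) := by gcongr
      _ < 1 := by rw [h4]; exact h5
  obtain ⟨a1, a2⟩ := abs_le.mp he'
  obtain ⟨b1, b2⟩ := abs_le.mp hf'
  have hε' : K * ε ≤ K * (ε * t) := by
    exact mul_le_mul_of_nonneg_left (le_mul_of_one_le_right hε ht1) hK
  have g1 : t * (N * f - e) ≤ (N + 2) * (K * (ε * t)) := by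
    have : N * f - e ≤ (N + 1) * (K * ε) := by
      linarith [mul_le_mul_of_nonneg_left b2 (by linarith : 0 ≤ N)]
    have h6 := mul_le_mul_of_nonneg_left this (by linarith : 0 ≤ t)
    have : 0 ≤ K * (ε * t) := by positivity
    linarith
  have g2 : e - (N + 1) * f ≤ (N + 2) * (K * (ε * t)) := by
    have : e - (N + 1) * f ≤ (N + 2) * (K * ε) := by
      linarith [mul_le_mul_of_nonneg_left b1 (by linarith : 0 ≤ N + 1)]
    have h6 := mul_le_mul_of_nonneg_left hε' (by linarith : 0 ≤ N + 2)
    linarith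
  have hw0 : 0 ≤ (N + 2) * (K * (ε * t)) := by positivity
  obtain ⟨w, hw⟩ : ∃ w, w = (N + 2) * (K * (ε * t)) := ⟨_, rfl⟩
  rw [← hw] at g1 g2 hw0
  have hw1 : 2 * w < 1 := by rw [hw]; linarith
  have g3 := mul_le_mul_of_nonneg_left g1 (by linarith : 0 ≤ N - 2)
  have g4 := mul_le_mul_of_nonneg_left g2 (by linarith : 0 ≤ N - 1)
  have g5 := mul_neg_of_pos_of_neg (by linarith : 0 < N - 1) (by linarith : 2 * w - 1 < 0)
  linarith

/-- The barrier `ψ = Q ^ (2 - n) - Q ^ (1 - n)`, `Q = ⟪B x, x⟫ ^ (1 / 2)`, is a strict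
supersolution on `Q ≥ 1` for every coefficient matrix whose entrywise distance to `A` is at most a
small multiple of `1 / Q`. For `A` itself the first power is annihilated and the second one
contributes `-(n - 1) Q ^ (-n - 1)`, which dominates the perturbation. -/
lemma barrier_strict {n : ℕ} (hn : 3 ≤ n) (A : Matrix (Fin n) (Fin n) ℝ)
    (B : EuclideanSpace ℝ (Fin n) →L[ℝ] EuclideanSpace ℝ (Fin n))
    (hc : ∃ c > 0, ∀ x, c * ‖x‖ ^ 2 ≤ ⟪B x, x⟫) (htr : ellTrace A B = n)
    (hAB : ∀ x, ∑ i, ∑ j, A i j * B x i * B x j = ⟪B x, x⟫) :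
    ∃ δ > 0, ∀ (x : EuclideanSpace ℝ (Fin n)) (A' : Matrix (Fin n) (Fin n) ℝ) (ε : ℝ), 0 ≤ ε →
      (∀ i j, |A' i j - A i j| ≤ ε) → 1 ≤ ⟪B x, x⟫ → ε * √⟪B x, x⟫ ≤ δ →
      ellTrace A' (formHess B ((2 - n) / 2) x) - ellTrace A' (formHess B ((1 - n) / 2) x) < 0 := by
  obtain ⟨K, hK, hpert⟩ := contraction_perturb A B hc
  have hN : (3 : ℝ) ≤ n := by exact_mod_cast hn
  refine ⟨1 / (2 * ((n : ℝ) + 2) * (K + 1)), by positivity, fun x A' ε hε hA' hq hsmall => ?_⟩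
  obtain ⟨h1, h2⟩ := hpert A' ε hε hA'
  replace h2 := h2 x
  rw [htr] at h1
  rw [hAB] at h2
  rw [ellTrace_formHess, ellTrace_formHess]
  exact barrier_scalar hN hK hε hq hsmall h1 h2

/-! ### The comparison argument -/

/-- At a point of `C²` regularity the gradient field is differentiable, and the second partial
derivatives `pdd` are the matrix entries of its derivative. -/
lemma gradient_of_contDiffAt {n : ℕ} {φ : EuclideanSpace ℝ (Fin n) → ℝ}
    {x : EuclideanSpace ℝ (Fin n)} (h : ContDiffAt ℝ 2 φ x) :
    (∀ᶠ y in nhds x, HasGradientAt φ (gradient φ y) y) ∧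
      HasFDerivAt (gradient φ) (fderiv ℝ (gradient φ) x) x ∧
      ∀ A : Matrix (Fin n) (Fin n) ℝ,
        ∑ i, ∑ j, A i j * pdd φ i j x = ellTrace A (fderiv ℝ (gradient φ) x) := by
  have h2 : DifferentiableAt ℝ (gradient φ) x := by
    have h3 : DifferentiableAt ℝ (fderiv ℝ φ) x :=
      (h.fderiv_right (m := 1) (by norm_num)).differentiableAt (by norm_num)
    exact ((InnerProductSpace.toDual ℝ _).symm.toContinuousLinearEquiv.differentiableAt).comp x h3
  refine ⟨?_, h2.hasFDerivAt, fun A => ?_⟩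
  · filter_upwards [h.eventually (by simp)] with y hy
    exact (hy.differentiableAt (by norm_num)).hasGradientAt
  · simp only [ellTrace]
    refine Finset.sum_congr rfl fun i _ => Finset.sum_congr rfl fun j _ => ?_
    congr 1
    have h4 := ((EuclideanSpace.proj j : EuclideanSpace ℝ (Fin n) →L[ℝ] ℝ).hasFDerivAt).comp x
      h2.hasFDerivAt
    rw [pdd]
    exact congrArg (fun F => F (EuclideanSpace.single i 1)) h4.fderiv

/-- Minimum principle in an exterior domain: a function that is nonnegative on the inner sphere,
asymptotically nonnegative at infinity and has no local minimum in the open exterior region is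
nonnegative, since a negative value would force a minimum over a large annulus. -/
lemma exterior_nonneg {n : ℕ} {G : EuclideanSpace ℝ (Fin n) → ℝ} {r : ℝ}
    (hcont : ContinuousOn G {x | r ≤ ‖x‖}) (hbd : ∀ x, ‖x‖ = r → 0 ≤ G x)
    (hinf : ∀ ε > 0, ∀ᶠ x in Bornology.cobounded (EuclideanSpace ℝ (Fin n)), -ε ≤ G x)
    (hmin : ∀ x, r < ‖x‖ → ¬ IsLocalMin G x) : ∀ x, r ≤ ‖x‖ → 0 ≤ G x := by
  intro y hy
  by_contra! hneg
  obtain ⟨r₂, -, hr₂⟩ := Filter.hasBasis_cobounded_norm.eventually_iff.mp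
    (hinf (-G y / 2) (by linarith))
  set S : Set (EuclideanSpace ℝ (Fin n)) := {x | r ≤ ‖x‖} ∩ Metric.closedBall 0 (max r₂ ‖y‖)
  have hS : IsCompact S := (isCompact_closedBall _ _).inter_left
    (isClosed_le continuous_const continuous_norm)
  have hyS : y ∈ S := ⟨hy, by simp⟩
  obtain ⟨z, hzS, hz⟩ := hS.exists_isMinOn ⟨y, hyS⟩ (hcont.mono Set.inter_subset_left)
  have hzy : G z ≤ G y := hz hyS
  have hall : ∀ x, r ≤ ‖x‖ → G z ≤ G x := by
    intro x hx
    by_cases hxS : x ∈ S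
    · exact hz hxS
    · have h1 : r₂ ≤ ‖x‖ := by
        by_contra! h2
        exact hxS ⟨hx, by simpa using Or.inl h2.le⟩
      have := hr₂ h1
      linarith
  have hzr : r < ‖z‖ := lt_of_le_of_ne hzS.1 fun h => by
    have := hbd z h.symm
    linarith
  refine hmin z hzr ?_
  filter_upwards [(isOpen_lt continuous_const continuous_norm).mem_nhds hzr] with x hx
  exact hall x (le_of_lt hx)

/-- Finitely many locally Lipschitz coefficients admit a common neighbourhood and constant. -/
lemma exists_common_lipschitz {n : ℕ} {a : Fin n → Fin n → EuclideanSpace ℝ (Fin n) → ℝ}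
    (ha : ∀ i j, LocallyLipschitz (a i j)) (u : EuclideanSpace ℝ (Fin n)) :
    ∃ K : ℝ, 0 ≤ K ∧ ∀ᶠ p in nhds u, ∀ i j, |a i j p - a i j u| ≤ K * ‖p - u‖ := by
  choose K t ht hK using fun i j => ha i j u
  refine ⟨∑ i, ∑ j, (K i j : ℝ), by positivity, ?_⟩
  have : ∀ᶠ p in nhds u, ∀ i j, p ∈ t i j :=
    Filter.eventually_all.mpr fun i => Filter.eventually_all.mpr fun j => ht i j
  filter_upwards [this] with p hp i j
  have h1 := (hK i j).dist_le_mul p (hp i j) u (mem_of_mem_nhds (ht i j))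
  rw [Real.dist_eq, dist_eq_norm] at h1
  refine h1.trans ?_
  gcongr
  calc (K i j : ℝ) ≤ ∑ j, (K i j : ℝ) :=
        Finset.single_le_sum (f := fun j => (K i j : ℝ)) (fun j _ => (K i j).2) (Finset.mem_univ j)
    _ ≤ _ := Finset.single_le_sum (f := fun i => ∑ j, (K i j : ℝ))
        (fun i _ => Finset.sum_nonneg fun j _ => (K i j).2) (Finset.mem_univ i)

/-- For `q = Q ^ 2` with `Q ≥ 2`, the subtracted term of the barrier is at most half of the leading
one. -/
lemma barrier_lower {n : ℕ} {q : ℝ} (hq : 4 ≤ q) :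
    q ^ ((2 - n : ℝ) / 2) / 2 ≤ q ^ ((2 - n : ℝ) / 2) - q ^ ((1 - n : ℝ) / 2) := by
  have hq0 : 0 < q := by linarith
  have h1 : q ^ ((1 - n : ℝ) / 2) = q ^ ((2 - n : ℝ) / 2) * (√q)⁻¹ := by
    rw [Real.sqrt_eq_rpow, ← Real.rpow_neg hq0.le, ← Real.rpow_add hq0]; ring_nf
  have h2 : (√q)⁻¹ ≤ 2⁻¹ := by
    refine inv_anti₀ (by norm_num) (Real.le_sqrt_of_sq_le (by linarith))
  have h3 : 0 < q ^ ((2 - n : ℝ) / 2) := Real.rpow_pos_of_pos hq0 _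
  rw [h1]
  nlinarith

/-- **Intermediate maximum-principle estimate (airfoil case):** with
`Φ(x) = φ(x) - u∞·x - c₀` normalized so that `Φ → 0` at infinity, one has
`|Φ(x)| ≤ C₁ |x|^{2-n}` on `{|x| ≥ R'}` for some `R' ≥ R`. -/
theorem stmt7 (n : ℕ) (hn : 3 ≤ n) (R : ℝ) (hR : 0 < R)
    (a : Fin n → Fin n → EuclideanSpace ℝ (Fin n) → ℝ)
    (ha_symm : ∀ p i j, a i j p = a j i p)
    (ha_lip : ∀ i j, LocallyLipschitz (a i j))
    (lam Lam : ℝ) (hlam : 0 < lam) (hlamLam : lam ≤ Lam)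
    (ha_ell : ∀ p ξ : EuclideanSpace ℝ (Fin n),
      lam * ‖ξ‖ ^ 2 ≤ ∑ i, ∑ j, a i j p * ξ i * ξ j ∧
      ∑ i, ∑ j, a i j p * ξ i * ξ j ≤ Lam * ‖ξ‖ ^ 2)
    (φ : EuclideanSpace ℝ (Fin n) → ℝ)
    (hφ : ContDiffOn ℝ 2 φ {x | R ≤ ‖x‖})
    (heq : ∀ x : EuclideanSpace ℝ (Fin n), R ≤ ‖x‖ →
      ∑ i, ∑ j, a i j (gradient φ x) * pdd φ i j x = 0)
    (uinf : EuclideanSpace ℝ (Fin n)) (C σ : ℝ) (hC : 0 < C) (hσ : 0 < σ)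
    (hdecay : ∀ x : EuclideanSpace ℝ (Fin n), R ≤ ‖x‖ →
      ‖gradient φ x - uinf‖ ≤ C * ‖x‖ ^ (-(1 + σ)))
    (c₀ : ℝ)
    (hc₀ : Filter.Tendsto (fun x : EuclideanSpace ℝ (Fin n) => φ x - ⟪uinf, x⟫ - c₀)
      (Filter.comap (fun x : EuclideanSpace ℝ (Fin n) => ‖x‖) Filter.atTop) (nhds 0)) :
    ∃ R' ≥ R, ∃ C₁ > 0, ∀ x : EuclideanSpace ℝ (Fin n), R' ≤ ‖x‖ →
      |φ x - ⟪uinf, x⟫ - c₀| ≤ C₁ * ‖x‖ ^ ((2 : ℝ) - n) := by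
  -- The frozen coefficients at infinity and the inverse quadratic form.
  set A : Matrix (Fin n) (Fin n) ℝ := fun i j => a i j uinf with hA
  obtain ⟨B, hBs, ⟨c, hc0, hc⟩, htr, hAB⟩ := exists_inverse_form A (fun i j => ha_symm uinf i j)
    lam hlam (fun ξ => (ha_ell uinf ξ).1)
  obtain ⟨δ, hδ, hbar⟩ := barrier_strict hn A B ⟨c, hc0, hc⟩ htr hAB
  obtain ⟨K, hK, hLip⟩ := exists_common_lipschitz ha_lip uinf
  rw [comap_norm_atTop] at hc₀
  have hnorm : Filter.Tendsto (fun x : EuclideanSpace ℝ (Fin n) => ‖x‖)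
    (Bornology.cobounded _) Filter.atTop := tendsto_norm_cobounded_atTop
  have hup : ∀ x, ⟪B x, x⟫ ≤ (‖B‖ + 1) * ‖x‖ ^ 2 := fun x => by
    calc ⟪B x, x⟫ ≤ ‖B x‖ * ‖x‖ := real_inner_le_norm _ _
      _ ≤ (‖B‖ * ‖x‖) * ‖x‖ := by gcongr; exact B.le_opNorm x
      _ ≤ _ := by nlinarith [sq_nonneg ‖x‖]
  set k := ‖B‖ + 1 with hk
  have hk0 : 0 < k := by positivity
  have P0 : ∀ᶠ x in Bornology.cobounded (EuclideanSpace ℝ (Fin n)), R + 1 ≤ ‖x‖ :=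
    hnorm.eventually_ge_atTop _
  have P2 : ∀ᶠ x in Bornology.cobounded (EuclideanSpace ℝ (Fin n)),
      |φ x - ⟪uinf, x⟫ - c₀| ≤ 1 := by
    have := hc₀.abs
    rw [abs_zero] at this
    exact this.eventually_le_const one_pos
  have P3 : ∀ᶠ x in Bornology.cobounded (EuclideanSpace ℝ (Fin n)), 4 ≤ ⟪B x, x⟫ := by
    have : Filter.Tendsto (fun x : EuclideanSpace ℝ (Fin n) => c * ‖x‖ ^ 2)
        (Bornology.cobounded _) Filter.atTop :=
      ((Filter.tendsto_pow_atTop two_ne_zero).comp hnorm).const_mul_atTop hc0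
    filter_upwards [this.eventually_ge_atTop 4] with x hx using hx.trans (hc x)
  -- The coefficient error times `Q` is `O(|x|^(-σ))`.
  have P4 : ∀ᶠ x in Bornology.cobounded (EuclideanSpace ℝ (Fin n)),
      K * (C * ‖x‖ ^ (-(1 + σ))) * √⟪B x, x⟫ ≤ δ := by
    have h1 : Filter.Tendsto (fun x : EuclideanSpace ℝ (Fin n) => K * C * √k * ‖x‖ ^ (-σ))
        (Bornology.cobounded _) (nhds 0) := by
      simpa using ((tendsto_rpow_neg_atTop hσ).comp hnorm).const_mul (K * C * √k)
    filter_upwards [h1.eventually_le_const hδ, P0] with x hx hxR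
    have hx0 : 0 < ‖x‖ := by linarith
    refine le_trans ?_ hx
    have h2 : √⟪B x, x⟫ ≤ √k * ‖x‖ := by
      rw [← Real.sqrt_sq hx0.le, ← Real.sqrt_mul hk0.le]
      exact Real.sqrt_le_sqrt (by simpa [Real.sqrt_sq hx0.le] using hup x)
    have h3 : ‖x‖ ^ (-σ) = ‖x‖ ^ (-(1 + σ)) * ‖x‖ := by
      rw [← Real.rpow_add_one hx0.ne']; ring_nf
    calc _ ≤ K * (C * ‖x‖ ^ (-(1 + σ))) * (√k * ‖x‖) := by gcongr
      _ = _ := by rw [h3]; ring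
  have P5 : ∀ᶠ x in Bornology.cobounded (EuclideanSpace ℝ (Fin n)),
      ∀ i j, |a i j (gradient φ x) - a i j uinf| ≤ K * (C * ‖x‖ ^ (-(1 + σ))) := by
    have h1 : Filter.Tendsto (fun x : EuclideanSpace ℝ (Fin n) => C * ‖x‖ ^ (-(1 + σ)))
        (Bornology.cobounded _) (nhds 0) := by
      simpa using ((tendsto_rpow_neg_atTop (by linarith : 0 < 1 + σ)).comp hnorm).const_mul C
    have h2 : Filter.Tendsto (gradient φ) (Bornology.cobounded _) (nhds uinf) := by
      rw [tendsto_iff_norm_sub_tendsto_zero]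
      refine squeeze_zero' (Filter.Eventually.of_forall fun x => norm_nonneg _) ?_ h1
      filter_upwards [P0] with x hx using hdecay x (by linarith)
    filter_upwards [h2.eventually hLip, P0] with x hx hxR i j
    exact (hx i j).trans (by gcongr; exact hdecay x (by linarith))
  -- The radius is also kept above `R + 1`, where `φ` is `C²` in a full neighbourhood of each point.
  obtain ⟨r, -, hr⟩ := Filter.hasBasis_cobounded_norm.eventually_iff.mp
    (P0.and (P2.and (P3.and (P4.and P5))))
  set R' := max r (R + 1) with hR'
  have hR'0 : 0 < R' := lt_of_lt_of_le (by linarith) (le_max_right r (R + 1))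
  have hprop : ∀ x : EuclideanSpace ℝ (Fin n), R' ≤ ‖x‖ → _ := fun x hx =>
    hr (show r ≤ ‖x‖ from (le_max_left _ _).trans hx)
  have hN : (3 : ℝ) ≤ n := by exact_mod_cast hn
  -- `m` bounds the leading power of the barrier from below on the inner sphere.
  set m : ℝ := (k * R' ^ 2) ^ ((2 - n : ℝ) / 2) with hm
  have hm0 : 0 < m := Real.rpow_pos_of_pos (by positivity) _
  set M : ℝ := 2 / m with hM
  have hM0 : 0 < M := by positivity
  have hC2 : ∀ x : EuclideanSpace ℝ (Fin n), R' ≤ ‖x‖ → ContDiffAt ℝ 2 φ x := by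
    intro x hx
    have hx' : R < ‖x‖ := by linarith [(hprop x hx).1]
    refine hφ.contDiffAt ?_
    filter_upwards [(isOpen_lt continuous_const continuous_norm).mem_nhds hx'] with y hy
    exact le_of_lt hy
  -- The two signs `τ = ±1` give the upper and the lower bound for `Φ`.
  have comparison : ∀ τ : ℝ, |τ| = 1 → ∀ x : EuclideanSpace ℝ (Fin n), R' ≤ ‖x‖ →
      0 ≤ M * (⟪B x, x⟫ ^ ((2 - n : ℝ) / 2) - ⟪B x, x⟫ ^ ((1 - n : ℝ) / 2))
        + τ * (φ x - ⟪uinf, x⟫ - c₀) := by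
    intro τ hτ
    have habs : ∀ y : ℝ, |τ * y| = |y| := fun y => by rw [abs_mul, hτ, one_mul]
    refine exterior_nonneg ?_ ?_ ?_ ?_
    · intro x hx
      obtain ⟨-, -, h3, -⟩ := hprop x hx
      have hq0 : 0 < ⟪B x, x⟫ := by linarith
      have c1 := (hasFDerivAt_form_rpow hBs ((2 - n : ℝ) / 2) hq0).continuousAt
      have c2 := (hasFDerivAt_form_rpow hBs ((1 - n : ℝ) / 2) hq0).continuousAt
      have c3 := (hC2 x hx).continuousAt
      have c4 : ContinuousAt (fun y : EuclideanSpace ℝ (Fin n) => ⟪uinf, y⟫) x := by fun_prop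
      exact (((c1.sub c2).const_mul M).add
        (((c3.sub c4).sub continuousAt_const).const_mul τ)).continuousWithinAt
    · intro x hx
      obtain ⟨-, h2, h3, -⟩ := hprop x hx.ge
      have h4 := barrier_lower (n := n) h3
      have h5 : m ≤ ⟪B x, x⟫ ^ ((2 - n : ℝ) / 2) := by
        refine Real.rpow_le_rpow_of_nonpos (by linarith) ?_ (by linarith)
        rw [← hx]; exact hup x
      have h6 : M * (m / 2) ≤
          M * (⟪B x, x⟫ ^ ((2 - n : ℝ) / 2) - ⟪B x, x⟫ ^ ((1 - n : ℝ) / 2)) := by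
        gcongr; linarith
      have h7 : M * (m / 2) = 1 := by rw [hM]; field_simp
      rw [← habs] at h2
      linarith [(abs_le.mp h2).1]
    · intro ε hε
      have h1 := hc₀.abs
      rw [abs_zero] at h1
      filter_upwards [h1.eventually_le_const hε, P3] with x hx h3
      have h4 := barrier_lower (n := n) h3
      have h5 : 0 < ⟪B x, x⟫ ^ ((2 - n : ℝ) / 2) := Real.rpow_pos_of_pos (by linarith) _
      have h6 : 0 ≤ M * (⟪B x, x⟫ ^ ((2 - n : ℝ) / 2) - ⟪B x, x⟫ ^ ((1 - n : ℝ) / 2)) :=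
        mul_nonneg hM0.le (by linarith)
      rw [← habs] at hx
      linarith [(abs_le.mp hx).1]
    · intro x hx hmin
      obtain ⟨h1, -, h3, h4, h5⟩ := hprop x hx.le
      obtain ⟨g1, g2, g3⟩ := gradient_of_contDiffAt (hC2 x hx.le)
      have hq0 : 0 < ⟪B x, x⟫ := by linarith
      have hqev : ∀ᶠ y in nhds x, 0 < ⟪B y, y⟫ := by
        have : Continuous fun y : EuclideanSpace ℝ (Fin n) => ⟪B y, y⟫ := by fun_prop
        exact this.continuousAt.eventually (lt_mem_nhds hq0)
      set A' : Matrix (Fin n) (Fin n) ℝ := fun i j => a i j (gradient φ x) with hA'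
      set H₁ := formHess B ((2 - n : ℝ) / 2) x
      set H₂ := formHess B ((1 - n : ℝ) / 2) x
      set D := fderiv ℝ (gradient φ) x
      have hDtot : HasFDerivAt (fun y : EuclideanSpace ℝ (Fin n) =>
          M • ((2 * ((2 - n : ℝ) / 2) * ⟪B y, y⟫ ^ ((2 - n : ℝ) / 2 - 1)) • B y
            + (-1 : ℝ) • (2 * ((1 - n : ℝ) / 2) * ⟪B y, y⟫ ^ ((1 - n : ℝ) / 2 - 1)) • B y)
          + τ • (gradient φ y - uinf)) (M • (H₁ + (-1 : ℝ) • H₂) + τ • D) x :=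
        (((hasFDerivAt_gradient_form_rpow hBs _ hq0).add
          ((hasFDerivAt_gradient_form_rpow hBs _ hq0).const_smul (-1 : ℝ))).const_smul M).add
          ((g2.sub_const uinf).const_smul τ)
      have hgrad : ∀ᶠ y in nhds x, HasGradientAt (fun x : EuclideanSpace ℝ (Fin n) =>
          M * (⟪B x, x⟫ ^ ((2 - n : ℝ) / 2) - ⟪B x, x⟫ ^ ((1 - n : ℝ) / 2))
            + τ * (φ x - ⟪uinf, x⟫ - c₀))
          (M • ((2 * ((2 - n : ℝ) / 2) * ⟪B y, y⟫ ^ ((2 - n : ℝ) / 2 - 1)) • B y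
            + (-1 : ℝ) • (2 * ((1 - n : ℝ) / 2) * ⟪B y, y⟫ ^ ((1 - n : ℝ) / 2 - 1)) • B y)
          + τ • (gradient φ y - uinf)) y := by
        filter_upwards [g1, hqev] with y hy hqy
        have f1 := (hasFDerivAt_form_rpow hBs ((2 - n : ℝ) / 2) hqy).sub
          (hasFDerivAt_form_rpow hBs ((1 - n : ℝ) / 2) hqy)
        have f2 := (hy.hasFDerivAt.sub (innerSL ℝ uinf).hasFDerivAt).sub_const c₀
        rw [hasGradientAt_iff_hasFDerivAt]
        refine ((f1.const_mul M).add (f2.const_mul τ)).congr_fderiv ?_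
        ext v
        simp
        ring
      -- At an interior minimum the contraction is nonnegative, whereas the barrier makes it negative.
      have hpos := ellTrace_nonneg A' (posSemidef_of_form A' (fun i j => ha_symm _ i j)
        fun ξ => le_trans (by positivity) (ha_ell (gradient φ x) ξ).1) _
        (second_order_nonneg hgrad hDtot hmin)
      have hzero : ellTrace A' D = 0 := by rw [← g3]; exact heq x (by linarith)
      have hneg := hbar x A' (K * (C * ‖x‖ ^ (-(1 + σ)))) (by positivity) h5 (by linarith) h4
      rw [ellTrace_add, ellTrace_smul, ellTrace_add, ellTrace_smul, ellTrace_smul, hzero] at hpos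
      nlinarith
  refine ⟨R', le_trans (by linarith) (le_max_right r (R + 1)),
    M * c ^ ((2 - n : ℝ) / 2), by positivity, fun x hx => ?_⟩
  obtain ⟨-, -, h3, -⟩ := hprop x hx
  have hx0 : 0 < ‖x‖ := lt_of_lt_of_le hR'0 hx
  have u1 := comparison 1 (by simp) x hx
  have u2 := comparison (-1) (by simp) x hx
  have hq' : 0 < ⟪B x, x⟫ ^ ((1 - n : ℝ) / 2) := Real.rpow_pos_of_pos (by linarith) _
  have u3 : ⟪B x, x⟫ ^ ((2 - n : ℝ) / 2) ≤ c ^ ((2 - n : ℝ) / 2) * ‖x‖ ^ ((2 : ℝ) - n) := by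
    have h1 : (c * ‖x‖ ^ 2) ^ ((2 - n : ℝ) / 2)
        = c ^ ((2 - n : ℝ) / 2) * ‖x‖ ^ ((2 : ℝ) - n) := by
      rw [Real.mul_rpow hc0.le (by positivity), ← Real.rpow_natCast, ← Real.rpow_mul hx0.le]
      congr 2
      push_cast; ring
    rw [← h1]
    exact Real.rpow_le_rpow_of_nonpos (by positivity) (hc x) (by linarith)
  have u4 : M * (⟪B x, x⟫ ^ ((2 - n : ℝ) / 2) - ⟪B x, x⟫ ^ ((1 - n : ℝ) / 2)) ≤
      M * (c ^ ((2 - n : ℝ) / 2) * ‖x‖ ^ ((2 : ℝ) - n)) := by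
    gcongr; linarith
  rw [abs_le]
  constructor <;> linarith
end
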